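/- Let $g = g(t,y)$ be a smooth function on $[0,\infty) \times [-1,1]$ satisfying $g(t,\pm 1) = 0$ for all $t \ge 0$ and solving $\partial_t g + \mathcal{L}g = \mathcal{N}(g)$ for $t > 0$ and $y \in (-1,1)$. Then there exists a constant $C > 0$ such that for all $t > 0$: $E'(t) + D(t) \le C\left(E(t)^2 + E(t)^{10} + \left(E(t)^{1/3} + E(t)^{5/2}\right) D(t)\right)$, where $E(t) = \frac{1}{2}\int_{-1}^{1} (\partial_y g(t,y))^2\, dy$ and $D(t) = 8\int_{-1}^{1} (\partial_y^2 g(t,y))^2\, dy + \frac{1}{2}\int_{-1}^{1} (1-y^2)(\partial_y^3 g(t,y))^2\, dy$. -/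

import Mathlib

open MeasureTheory Set
open scoped ENNReal

/-- Spatial derivative on the interval `[-1, 1]`. -/
noncomputable def dI (f : ℝ → ℝ) : ℝ → ℝ := derivWithin f (Icc (-1) 1)

/-- The energy `E(t) = (1/2) ∫_{-1}^{1} (∂_y g(t,y))² dy`. -/
noncomputable def energy (g : ℝ → ℝ → ℝ) (t : ℝ) : ℝ :=
  (1/2) * ∫ y in Ioo (-1:ℝ) 1, (dI (g t) y) ^ 2

/-- The dissipation
`D(t) = 8 ∫_{-1}^{1} (∂_y² g(t,y))² dy + (1/2) ∫_{-1}^{1} (1-y²) (∂_y³ g(t,y))² dy`. -/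
noncomputable def dissipation (g : ℝ → ℝ → ℝ) (t : ℝ) : ℝ :=
  8 * (∫ y in Ioo (-1:ℝ) 1, (dI (dI (g t)) y) ^ 2)
    + (1/2) * ∫ y in Ioo (-1:ℝ) 1, (1 - y ^ 2) * (dI (dI (dI (g t))) y) ^ 2

/-- `g` is a smooth solution of `∂_t g + 𝓛 g = 𝓝(g)` on `(0,∞) × (-1,1)` with
`g(t, ±1) = 0`, where `𝓛 g = -10 ∂_y² g - 5 y ∂_y³ g + ((1-y²)/2) ∂_y⁴ g` and `𝓝(g)`
is the nonlinearity (2.9) of the Lagrangian thin-film equation. -/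
def IsSolution (g : ℝ → ℝ → ℝ) : Prop :=
  ContDiffOn ℝ ((⊤ : ℕ∞) : WithTop ℕ∞) (fun q : ℝ × ℝ => g q.1 q.2) ((Ici (0:ℝ)) ×ˢ (Icc (-1:ℝ) 1)) ∧
  (∀ t ≥ (0:ℝ), g t (-1) = 0 ∧ g t 1 = 0) ∧
  (∀ t > (0:ℝ), ∀ y ∈ Ioo (-1:ℝ) 1,
    deriv (fun s => g s y) t
      + (-10 * dI (dI (g t)) y - 5 * y * dI (dI (dI (g t))) y
          + (1 - y ^ 2) / 2 * dI (dI (dI (dI (g t)))) y)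
    = -25 * (1 + g t y) ^ 4 * (dI (g t) y) ^ 2
      - 10 * ((1 + g t y) ^ 5 - 1) * dI (dI (g t)) y
      - 15 * y * (1 + g t y) ^ 3 * (dI (g t) y) ^ 3
      - 30 * y * (1 + g t y) ^ 4 * dI (g t) y * dI (dI (g t)) y
      - 5 * y * ((1 + g t y) ^ 5 - 1) * dI (dI (dI (g t))) y
      + (1 - y ^ 2) / 2 * (1 + g t y) ^ 2 * (dI (g t) y) ^ 4
      + 11/2 * (1 - y ^ 2) * (1 + g t y) ^ 3 * (dI (g t) y) ^ 2 * dI (dI (g t)) y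
      + 2 * (1 - y ^ 2) * (1 + g t y) ^ 4 * (dI (dI (g t)) y) ^ 2
      + 7/2 * (1 - y ^ 2) * (1 + g t y) ^ 4 * dI (g t) y * dI (dI (dI (g t))) y
      + (1 - y ^ 2) / 2 * ((1 + g t y) ^ 5 - 1) * dI (dI (dI (dI (g t)))) y)

/-!
Test the equation with `-∂_y² g`. The terms of top order combine into the density of `D` and an
exact derivative, whose boundary contribution `-2 ((∂_y² g(1))² + (∂_y² g(-1))²)` has the good sign.
The remaining terms are superquadratic in `g`. They are absorbed into `D` by bounding `g` and
`∂_y g` uniformly and `∂_y² g` through Hardy and interpolation inequalities for the weight `1 - y²`,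
which degenerates at the boundary: each of them is at most `D` times powers of `√E` between the
first and the fifth.
-/

section Interval

variable {a b : ℝ}

theorem intervalIntegral_eq_setIntegral_Ioo (hab : a ≤ b) (u : ℝ → ℝ) :
    ∫ y in a..b, u y = ∫ y in Ioo a b, u y := by
  rw [intervalIntegral.integral_of_le hab, integral_Ioc_eq_integral_Ioo]

theorem intervalIntegral_congr_Ioo (hab : a ≤ b) {u v : ℝ → ℝ} (h : EqOn u v (Ioo a b)) :
    ∫ y in a..b, u y = ∫ y in a..b, v y := by
  simp only [intervalIntegral_eq_setIntegral_Ioo hab]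
  exact setIntegral_congr_fun measurableSet_Ioo h

theorem abs_sub_le_integral_of_abs_deriv_le {F F' B : ℝ → ℝ} (hF : ContinuousOn F (Icc a b))
    (hF' : ∀ z ∈ Ioo a b, HasDerivAt F (F' z) z) (hB : ∀ z ∈ Ioo a b, |F' z| ≤ B z)
    (hBi : IntervalIntegrable B volume a b) {x y : ℝ} (hx : x ∈ Icc a b) (hy : y ∈ Icc a b) :
    |F y - F x| ≤ ∫ z in a..b, B z := by
  wlog h : x ≤ y generalizing x y
  · rw [abs_sub_comm]
    exact this hy hx (le_of_not_ge h)
  have hIoo : Ioo x y ⊆ Ioo a b := Ioo_subset_Ioo hx.1 hy.2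
  have hab : a ≤ b := hx.1.trans hx.2
  calc |F y - F x| ≤ ∫ z in x..y, B z :=
        norm_sub_le_integral_of_norm_deriv_le_of_le h (hF.mono (Icc_subset_Icc hx.1 hy.2))
          (fun z hz => (hF' z (hIoo hz)).differentiableAt.differentiableWithinAt)
          (.of_forall fun z hz => (hF' z (hIoo hz)).deriv ▸ hB z (hIoo hz))
          (hBi.mono_set (by
            rw [uIcc_of_le h, uIcc_of_le hab]
            exact Icc_subset_Icc hx.1 hy.2))
    _ ≤ ∫ z in a..b, B z := by
        refine intervalIntegral.integral_mono_interval hx.1 h hy.2 ?_ hBi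
        rw [← restrict_Ioo_eq_restrict_Ioc]
        filter_upwards [self_mem_ae_restrict measurableSet_Ioo] with z hz
        exact (abs_nonneg _).trans (hB z hz)

theorem integral_abs_mul_abs_le_sqrt_mul_sqrt (hab : a ≤ b) {u v : ℝ → ℝ}
    (hu : ContinuousOn u (Icc a b)) (hv : ContinuousOn v (Icc a b)) :
    ∫ y in a..b, |u y| * |v y| ≤ √(∫ y in a..b, u y ^ 2) * √(∫ y in a..b, v y ^ 2) := by
  have memLp_two {w : ℝ → ℝ} (hw : ContinuousOn w (Icc a b)) :
      MemLp w (ENNReal.ofReal 2) (volume.restrict (Icc a b)) := by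
    rw [ENNReal.ofReal_ofNat, memLp_two_iff_integrable_sq
      (hw.aestronglyMeasurable measurableSet_Icc)]
    exact (hw.pow 2).integrableOn_Icc
  have cauchy_schwarz := integral_mul_norm_le_Lp_mul_Lq .two_two (memLp_two hu) (memLp_two hv)
  simpa only [Real.norm_eq_abs, Real.rpow_ofNat, sq_abs, ← Real.sqrt_eq_rpow,
    integral_Icc_eq_integral_Ioc, ← intervalIntegral.integral_of_le hab] using cauchy_schwarz

end Interval

section PartialDerivatives

variable {E : Type*} [NormedAddCommGroup E] [NormedSpace ℝ E] {G : ℝ × ℝ → E} {I J : Set ℝ}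
  {a b t y : ℝ}

theorem hasDerivAt_fst_of_differentiableOn (hG : DifferentiableOn ℝ G (I ×ˢ J)) (hI : I ∈ nhds t)
    (hy : y ∈ J) :
    HasDerivAt (fun s => G (s, y)) (fderivWithin ℝ G (I ×ˢ J) (t, y) (1, 0)) t :=
  ((hG (t, y) (mk_mem_prod (mem_of_mem_nhds hI) hy)).hasFDerivWithinAt.comp_hasDerivWithinAt t
    ((hasDerivWithinAt_id t I).prodMk (hasDerivWithinAt_const t I y))
    fun _ hs => mk_mem_prod hs hy).hasDerivAt hI

theorem hasDerivWithinAt_snd_of_differentiableOn (hG : DifferentiableOn ℝ G (I ×ˢ J)) (ht : t ∈ I)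
    (hy : y ∈ J) :
    HasDerivWithinAt (fun z => G (t, z)) (fderivWithin ℝ G (I ×ˢ J) (t, y) (0, 1)) J y :=
  (hG (t, y) (mk_mem_prod ht hy)).hasFDerivWithinAt.comp_hasDerivWithinAt y
    ((hasDerivWithinAt_const y J t).prodMk (hasDerivWithinAt_id y J)) fun _ hz => mk_mem_prod ht hz

theorem hasDerivAt_integral_of_continuousOn (hab : a ≤ b) (hI : IsOpen I) (ht : t ∈ I)
    {F F' : ℝ → ℝ → E} (hF : ∀ s ∈ I, ContinuousOn (F s) (Icc a b))
    (hF' : ContinuousOn (Function.uncurry F') (I ×ˢ Icc a b))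
    (hderiv : ∀ s ∈ I, ∀ y ∈ Icc a b, HasDerivAt (fun r => F r y) (F' s y) s) :
    HasDerivAt (fun s => ∫ y in a..b, F s y) (∫ y in a..b, F' t y) t := by
  obtain ⟨K, hK, htK, hKI⟩ := exists_compact_subset hI ht
  have hKt : K ∈ nhds t := mem_interior_iff_mem_nhds.1 htK
  obtain ⟨C, hC⟩ := (hK.prod isCompact_Icc).exists_bound_of_continuousOn
    (hF'.mono (prod_mono_left hKI))
  have integrable {u : ℝ → E} (hu : ContinuousOn u (Icc a b)) : IntervalIntegrable u volume a b :=
    hu.intervalIntegrable_of_Icc hab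
  have slice : ContinuousOn (F' t) (Icc a b) :=
    hF'.comp (by fun_prop) fun y hy => mk_mem_prod ht hy
  have mem_Icc {y : ℝ} (hy : y ∈ uIoc a b) : y ∈ Icc a b :=
    Ioc_subset_Icc_self (uIoc_of_le hab ▸ hy)
  refine (intervalIntegral.hasDerivAt_integral_of_dominated_loc_of_deriv_le
    (bound := fun _ => C) hKt ?_ (integrable (hF t ht)) (integrable slice).def'.1
    (.of_forall fun y hy s hs => hC (s, y) (mk_mem_prod hs (mem_Icc hy))) (by simp)
    (.of_forall fun y hy s hs => hderiv s (hKI hs) y (mem_Icc hy))).2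
  filter_upwards [hKt] with s hs
  exact (integrable (hF s (hKI hs))).def'.1

end PartialDerivatives

theorem one_sub_sq_nonneg {y : ℝ} (hy : y ∈ Icc (-1 : ℝ) 1) : 0 ≤ 1 - y ^ 2 :=
  sub_nonneg.2 ((sq_le_one_iff_abs_le_one y).2 (abs_le.2 hy))

theorem abs_sqrt_mul_mul_abs_sqrt_mul {ω : ℝ} (hω : 0 ≤ ω) (a b : ℝ) :
    |√ω * a| * |√ω * b| = ω * |a * b| := by
  rw [← abs_mul, mul_mul_mul_comm, Real.mul_self_sqrt hω, abs_mul, abs_of_nonneg hω]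

theorem intervalIntegrable_of_continuousOn_Icc {u : ℝ → ℝ} (hu : ContinuousOn u (Icc (-1) 1)) :
    IntervalIntegrable u volume (-1) 1 :=
  hu.intervalIntegrable_of_Icc (by norm_num)

theorem hasDerivAt_one_sub_sq (y : ℝ) : HasDerivAt (fun z : ℝ => 1 - z ^ 2) (-2 * y) y :=
  ((hasDerivAt_pow 2 y).const_sub 1).congr_deriv (by norm_num)

section dI

variable {f : ℝ → ℝ} {y : ℝ}

theorem uniqueDiffOn_Icc_neg_one_one : UniqueDiffOn ℝ (Icc (-1 : ℝ) 1) :=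
  uniqueDiffOn_Icc (by norm_num)

theorem contDiffOn_dI {m n : WithTop ℕ∞} (hf : ContDiffOn ℝ n f (Icc (-1) 1)) (hmn : m + 1 ≤ n) :
    ContDiffOn ℝ m (dI f) (Icc (-1) 1) :=
  hf.derivWithin uniqueDiffOn_Icc_neg_one_one hmn

theorem continuousOn_dI (hf : ContDiffOn ℝ 1 f (Icc (-1) 1)) :
    ContinuousOn (dI f) (Icc (-1) 1) :=
  hf.continuousOn_derivWithin uniqueDiffOn_Icc_neg_one_one le_rfl

theorem hasDerivAt_dI (hf : ContDiffOn ℝ 1 f (Icc (-1) 1)) (hy : y ∈ Ioo (-1 : ℝ) 1) :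
    HasDerivAt f (dI f y) y :=
  (hf.differentiableOn one_ne_zero y (Ioo_subset_Icc_self hy)).hasDerivWithinAt.hasDerivAt
    (Icc_mem_nhds hy.1 hy.2)

theorem integral_mul_dI_eq {u v : ℝ → ℝ} (hu : ContDiffOn ℝ 1 u (Icc (-1) 1))
    (hv : ContDiffOn ℝ 1 v (Icc (-1) 1)) :
    ∫ y in (-1)..1, u y * dI v y =
      u 1 * v 1 - u (-1) * v (-1) - ∫ y in (-1)..1, dI u y * v y := by
  have uIcc_eq : uIcc (-1 : ℝ) 1 = Icc (-1) 1 := uIcc_of_le (by norm_num)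
  have hasDerivWithinAt {w : ℝ → ℝ} (hw : ContDiffOn ℝ 1 w (Icc (-1) 1)) :
      ∀ y ∈ uIcc (-1 : ℝ) 1, HasDerivWithinAt w (dI w y) (uIcc (-1) 1) y := by
    rw [uIcc_eq]
    exact fun y hy => (hw.differentiableOn one_ne_zero y hy).hasDerivWithinAt
  exact intervalIntegral.integral_mul_deriv_eq_deriv_mul_of_hasDerivWithinAt
    (hasDerivWithinAt hu) (hasDerivWithinAt hv)
    (intervalIntegrable_of_continuousOn_Icc (continuousOn_dI hu))
    (intervalIntegrable_of_continuousOn_Icc (continuousOn_dI hv))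

end dI

section Norms

variable {u v p : ℝ → ℝ} {y : ℝ}

/-- The `L²(-1, 1)` norm of a continuous function. -/
noncomputable def l2Norm (u : ℝ → ℝ) : ℝ := √(∫ y in (-1)..1, u y ^ 2)

/-- The norm `‖√(1 - y²) u‖` of `L²(-1, 1)`, with the weight that degenerates at the endpoints. -/
noncomputable def weightedL2Norm (u : ℝ → ℝ) : ℝ := l2Norm fun y => √(1 - y ^ 2) * u y

theorem l2Norm_nonneg (u : ℝ → ℝ) : 0 ≤ l2Norm u := Real.sqrt_nonneg _

theorem l2Norm_sq (u : ℝ → ℝ) : l2Norm u ^ 2 = ∫ y in (-1)..1, u y ^ 2 :=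
  Real.sq_sqrt (intervalIntegral.integral_nonneg (by norm_num) fun _ _ => sq_nonneg _)

theorem weightedL2Norm_sq (u : ℝ → ℝ) :
    weightedL2Norm u ^ 2 = ∫ y in (-1)..1, (1 - y ^ 2) * u y ^ 2 := by
  rw [weightedL2Norm, l2Norm_sq]
  refine intervalIntegral_congr_Ioo (by norm_num) fun y hy => ?_
  simp only [mul_pow, Real.sq_sqrt (one_sub_sq_nonneg (Ioo_subset_Icc_self hy))]

theorem integral_abs_mul_abs_le (hu : ContinuousOn u (Icc (-1) 1))
    (hv : ContinuousOn v (Icc (-1) 1)) :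
    ∫ y in (-1)..1, |u y| * |v y| ≤ l2Norm u * l2Norm v :=
  integral_abs_mul_abs_le_sqrt_mul_sqrt (by norm_num) hu hv

theorem abs_integral_le_l2Norm_mul_l2Norm (hu : ContinuousOn u (Icc (-1) 1))
    (hv : ContinuousOn v (Icc (-1) 1)) (hp : ∀ y ∈ Icc (-1 : ℝ) 1, |p y| ≤ |u y| * |v y|) :
    |∫ y in (-1)..1, p y| ≤ l2Norm u * l2Norm v :=
  calc |∫ y in (-1)..1, p y| ≤ ∫ y in (-1)..1, |u y| * |v y| :=
        intervalIntegral.norm_integral_le_of_norm_le (f := p) (by norm_num)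
          (.of_forall fun y hy => hp y (Ioc_subset_Icc_self hy))
          (intervalIntegrable_of_continuousOn_Icc (u := fun y => |u y| * |v y|) (by fun_prop))
    _ ≤ l2Norm u * l2Norm v := integral_abs_mul_abs_le hu hv

theorem abs_le_sqrt_two_mul_l2Norm_dI (hu : ContDiffOn ℝ 1 u (Icc (-1) 1)) (hu₀ : u (-1) = 0)
    (hy : y ∈ Icc (-1 : ℝ) 1) : |u y| ≤ √2 * l2Norm (dI u) := by
  have hdu := continuousOn_dI hu
  have norm_one : l2Norm (fun _ => 1) = √2 := by
    rw [l2Norm]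
    norm_num
  calc |u y| = |u y - u (-1)| := by rw [hu₀, sub_zero]
    _ ≤ ∫ z in (-1)..1, |(1 : ℝ)| * |dI u z| :=
      abs_sub_le_integral_of_abs_deriv_le hu.continuousOn (fun z => hasDerivAt_dI hu)
        (fun z _ => by rw [abs_one, one_mul])
        (intervalIntegrable_of_continuousOn_Icc (by fun_prop)) (by norm_num) hy
    _ ≤ √2 * l2Norm (dI u) := norm_one ▸ integral_abs_mul_abs_le continuousOn_const hdu

theorem sq_le_two_mul_l2Norm_mul_l2Norm_dI (hu : ContDiffOn ℝ 1 u (Icc (-1) 1)) {z : ℝ}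
    (hz : z ∈ Icc (-1 : ℝ) 1) (huz : u z = 0) (hy : y ∈ Icc (-1 : ℝ) 1) :
    u y ^ 2 ≤ 2 * l2Norm u * l2Norm (dI u) := by
  have hc := hu.continuousOn
  have hdu := continuousOn_dI hu
  calc u y ^ 2 ≤ |u y ^ 2 - u z ^ 2| := by
        rw [huz]
        simp
    _ ≤ ∫ x in (-1)..1, 2 * (|u x| * |dI u x|) :=
      abs_sub_le_integral_of_abs_deriv_le (F := fun x => u x ^ 2) (by fun_prop)
        (fun x hx => (hasDerivAt_dI hu hx).fun_pow 2)
        (fun x _ => by simp [abs_mul, mul_assoc])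
        (intervalIntegrable_of_continuousOn_Icc (by fun_prop)) hz hy
    _ ≤ 2 * l2Norm u * l2Norm (dI u) := by
        rw [intervalIntegral.integral_const_mul, mul_assoc]
        gcongr
        exact integral_abs_mul_abs_le hc hdu

theorem l2Norm_le_four_mul_l2Norm_dI (hu : ContDiffOn ℝ 1 u (Icc (-1) 1)) {z : ℝ}
    (hz : z ∈ Icc (-1 : ℝ) 1) (huz : u z = 0) : l2Norm u ≤ 4 * l2Norm (dI u) := by
  have hc := hu.continuousOn
  have hsq : l2Norm u ^ 2 ≤ 4 * l2Norm (dI u) * l2Norm u :=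
    calc l2Norm u ^ 2 ≤ ∫ _ in (-1 : ℝ)..1, 2 * l2Norm u * l2Norm (dI u) := by
          rw [l2Norm_sq]
          exact intervalIntegral.integral_mono_on (by norm_num)
            (intervalIntegrable_of_continuousOn_Icc (by fun_prop)) (by simp)
            fun y hy => sq_le_two_mul_l2Norm_mul_l2Norm_dI hu hz huz hy
      _ = 4 * l2Norm (dI u) * l2Norm u := by
          rw [intervalIntegral.integral_const, smul_eq_mul]
          ring
  rcases (l2Norm_nonneg u).eq_or_lt with h | h
  · rw [← h]
    exact mul_nonneg (by norm_num) (l2Norm_nonneg _)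
  · exact le_of_mul_le_mul_right (by rwa [← sq]) h

theorem integral_one_sub_sq_mul_deriv {v v' : ℝ → ℝ} (hv : ContinuousOn v (Icc (-1) 1))
    (hv' : ContinuousOn v' (Icc (-1) 1)) (hderiv : ∀ y ∈ Ioo (-1 : ℝ) 1, HasDerivAt v (v' y) y) :
    ∫ y in (-1)..1, (1 - y ^ 2) * v' y = ∫ y in (-1)..1, 2 * y * v y := by
  have ftc : ∫ y in (-1)..1, (-2 * y * v y + (1 - y ^ 2) * v' y) = 0 := by
    rw [intervalIntegral.integral_eq_sub_of_hasDerivAt_of_le (by norm_num)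
      (f := fun y => (1 - y ^ 2) * v y) (by fun_prop)
      (fun y hy => (hasDerivAt_one_sub_sq y).fun_mul (hderiv y hy))
      (intervalIntegrable_of_continuousOn_Icc (by fun_prop))]
    norm_num
  rw [← sub_eq_zero, ← ftc, ← intervalIntegral.integral_sub]
  · congr 1 with y
    ring
  all_goals exact intervalIntegrable_of_continuousOn_Icc (by fun_prop)

theorem weightedL2Norm_dI_sq_le (hu : ContDiffOn ℝ 2 u (Icc (-1) 1)) :
    weightedL2Norm (dI u) ^ 2 ≤
      2 * l2Norm u * l2Norm (dI u) + l2Norm u * weightedL2Norm (dI (dI u)) := by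
  have hu₁ := hu.of_le one_le_two
  have hdu := contDiffOn_dI (m := 1) hu (by norm_num)
  have c₀ := hu.continuousOn
  have c₁ := hdu.continuousOn
  have c₂ := continuousOn_dI hdu
  have parts := integral_one_sub_sq_mul_deriv (v := fun y => u y * dI u y)
    (v' := fun y => dI u y * dI u y + u y * dI (dI u) y) (by fun_prop) (by fun_prop)
    fun y hy => (hasDerivAt_dI hu₁ hy).fun_mul (hasDerivAt_dI hdu hy)
  have split : weightedL2Norm (dI u) ^ 2 = 2 * (∫ y in (-1)..1, y * (u y * dI u y)) -
      ∫ y in (-1)..1, (1 - y ^ 2) * (u y * dI (dI u) y) := by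
    rw [weightedL2Norm_sq, eq_sub_iff_add_eq, ← intervalIntegral.integral_add,
      ← intervalIntegral.integral_const_mul]
    · simpa only [mul_add, ← sq, mul_assoc] using parts
    all_goals exact intervalIntegrable_of_continuousOn_Icc (by fun_prop)
  have first_order : |∫ y in (-1)..1, y * (u y * dI u y)| ≤ l2Norm u * l2Norm (dI u) := by
    refine abs_integral_le_l2Norm_mul_l2Norm c₀ c₁ fun y hy => ?_
    rw [abs_mul, ← abs_mul (u y)]
    exact mul_le_of_le_one_left (abs_nonneg _) (abs_le.2 hy)
  have second_order : |∫ y in (-1)..1, (1 - y ^ 2) * (u y * dI (dI u) y)| ≤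
      l2Norm u * weightedL2Norm (dI (dI u)) := by
    refine abs_integral_le_l2Norm_mul_l2Norm c₀ (by fun_prop) fun y hy => ?_
    rw [abs_mul, abs_mul, abs_mul, mul_left_comm]
    have hω := one_sub_sq_nonneg hy
    gcongr
    exact Real.le_sqrt_of_sq_le (by nlinarith [sq_nonneg y])
  linarith [le_abs_self (∫ y in (-1)..1, y * (u y * dI u y)),
    neg_abs_le (∫ y in (-1)..1, (1 - y ^ 2) * (u y * dI (dI u) y))]

theorem l2Norm_sq_eq_weighted (hu : ContDiffOn ℝ 1 u (Icc (-1) 1)) :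
    l2Norm u ^ 2 = 3 / 2 * weightedL2Norm u ^ 2 +
      ∫ y in (-1)..1, (1 - y ^ 2) * (y * (u y * dI u y)) := by
  have c₀ := hu.continuousOn
  have c₁ := continuousOn_dI hu
  have parts := integral_one_sub_sq_mul_deriv (v := fun y => y * u y ^ 2)
    (v' := fun y => 1 * u y ^ 2 + y * (2 * u y * dI u y)) (by fun_prop) (by fun_prop)
    fun y hy => (hasDerivAt_id' y).fun_mul
      (((hasDerivAt_dI hu hy).fun_pow 2).congr_deriv (by norm_num))
  have integrable {p : ℝ → ℝ} := intervalIntegrable_of_continuousOn_Icc (u := p)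
  have lhs : ∫ y in (-1)..1, (1 - y ^ 2) * (1 * u y ^ 2 + y * (2 * u y * dI u y)) =
      weightedL2Norm u ^ 2 + 2 * ∫ y in (-1)..1, (1 - y ^ 2) * (y * (u y * dI u y)) := by
    rw [weightedL2Norm_sq, ← intervalIntegral.integral_const_mul,
      ← intervalIntegral.integral_add (integrable (by fun_prop)) (integrable (by fun_prop))]
    congr 1 with y
    ring
  have rhs : ∫ y in (-1)..1, 2 * y * (y * u y ^ 2) =
      2 * l2Norm u ^ 2 - 2 * weightedL2Norm u ^ 2 := by
    rw [l2Norm_sq, weightedL2Norm_sq, ← mul_sub, ← intervalIntegral.integral_sub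
      (integrable (by fun_prop)) (integrable (by fun_prop)),
      ← intervalIntegral.integral_const_mul]
    congr 1 with y
    ring
  linarith

theorem l2Norm_sq_le_weighted (hu : ContDiffOn ℝ 1 u (Icc (-1) 1)) :
    l2Norm u ^ 2 ≤ 3 / 2 * weightedL2Norm u ^ 2 + weightedL2Norm u * weightedL2Norm (dI u) := by
  have c₀ := hu.continuousOn
  have c₁ := continuousOn_dI hu
  have cross : |∫ y in (-1)..1, (1 - y ^ 2) * (y * (u y * dI u y))| ≤
      weightedL2Norm u * weightedL2Norm (dI u) := by
    refine abs_integral_le_l2Norm_mul_l2Norm (by fun_prop) (by fun_prop) fun y hy => ?_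
    have hω := one_sub_sq_nonneg hy
    calc |(1 - y ^ 2) * (y * (u y * dI u y))|
        = |y| * ((1 - y ^ 2) * |u y * dI u y|) := by
          rw [abs_mul, abs_mul, abs_of_nonneg hω, mul_left_comm]
      _ ≤ (1 - y ^ 2) * |u y * dI u y| :=
          mul_le_of_le_one_left (by positivity) (abs_le.2 hy)
      _ = |√(1 - y ^ 2) * u y| * |√(1 - y ^ 2) * dI u y| := by
          rw [abs_sqrt_mul_mul_abs_sqrt_mul hω]
  linarith [l2Norm_sq_eq_weighted hu,
    le_abs_self (∫ y in (-1)..1, (1 - y ^ 2) * (y * (u y * dI u y)))]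

theorem one_sub_sq_mul_sq_le (hu : ContDiffOn ℝ 1 u (Icc (-1) 1)) (hy : y ∈ Icc (-1 : ℝ) 1) :
    (1 - y ^ 2) * u y ^ 2 ≤ 2 * l2Norm u ^ 2 + 2 * weightedL2Norm u * weightedL2Norm (dI u) := by
  have c₀ := hu.continuousOn
  have c₁ := continuousOn_dI hu
  have cω : ContinuousOn (fun y => √(1 - y ^ 2) * u y) (Icc (-1) 1) := by fun_prop
  have cω' : ContinuousOn (fun y => √(1 - y ^ 2) * dI u y) (Icc (-1) 1) := by fun_prop
  have deriv_le (x : ℝ) (hx : x ∈ Ioo (-1 : ℝ) 1) :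
      |-2 * x * u x ^ 2 + (1 - x ^ 2) * (2 * u x * dI u x)| ≤
        2 * u x ^ 2 + 2 * (|√(1 - x ^ 2) * u x| * |√(1 - x ^ 2) * dI u x|) := by
    have hω := one_sub_sq_nonneg (Ioo_subset_Icc_self hx)
    refine (abs_add_le _ _).trans (add_le_add ?_ (le_of_eq ?_))
    · have hx₁ : |x| ≤ 1 := abs_le.2 (Ioo_subset_Icc_self hx)
      rw [abs_mul, abs_mul, abs_sq, abs_neg, abs_two]
      exact mul_le_mul_of_nonneg_right (by linarith) (sq_nonneg _)
    · rw [abs_sqrt_mul_mul_abs_sqrt_mul hω, mul_assoc 2, abs_mul, abs_mul 2, abs_two,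
        abs_of_nonneg hω, mul_left_comm]
  calc (1 - y ^ 2) * u y ^ 2
      ≤ |(1 - y ^ 2) * u y ^ 2 - (1 - (-1) ^ 2) * u (-1) ^ 2| := by
        norm_num only [zero_mul, sub_zero]
        exact le_abs_self _
    _ ≤ ∫ x in (-1)..1, (2 * u x ^ 2 + 2 * (|√(1 - x ^ 2) * u x| * |√(1 - x ^ 2) * dI u x|)) :=
        abs_sub_le_integral_of_abs_deriv_le (F := fun x => (1 - x ^ 2) * u x ^ 2) (by fun_prop)
          (fun x hx => (hasDerivAt_one_sub_sq x).fun_mul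
            (((hasDerivAt_dI hu hx).fun_pow 2).congr_deriv (by norm_num)))
          deriv_le (intervalIntegrable_of_continuousOn_Icc (by fun_prop)) (by norm_num) hy
    _ = 2 * l2Norm u ^ 2 + 2 * ∫ x in (-1)..1, |√(1 - x ^ 2) * u x| * |√(1 - x ^ 2) * dI u x| := by
        rw [l2Norm_sq, intervalIntegral.integral_add, intervalIntegral.integral_const_mul,
          intervalIntegral.integral_const_mul]
        all_goals exact intervalIntegrable_of_continuousOn_Icc (by fun_prop)
    _ ≤ 2 * l2Norm u ^ 2 + 2 * weightedL2Norm u * weightedL2Norm (dI u) := by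
        rw [mul_assoc]
        gcongr
        exact integral_abs_mul_abs_le cω cω'

end Norms

section Profile

variable {f : ℝ → ℝ} {y : ℝ}

/-- The energy of a single profile `f = g(t, ·)`. -/
noncomputable def profileEnergy (f : ℝ → ℝ) : ℝ := 1 / 2 * l2Norm (dI f) ^ 2

/-- The dissipation of a single profile `f = g(t, ·)`. -/
noncomputable def profileDissipation (f : ℝ → ℝ) : ℝ :=
  8 * l2Norm (dI (dI f)) ^ 2 + 1 / 2 * weightedL2Norm (dI (dI (dI f))) ^ 2

/-- The linear operator `𝓛` of the equation. -/
noncomputable def linearOp (f : ℝ → ℝ) (y : ℝ) : ℝ :=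
  -10 * dI (dI f) y - 5 * y * dI (dI (dI f)) y + (1 - y ^ 2) / 2 * dI (dI (dI (dI f))) y

/-- The nonlinearity `𝓝` of the equation. -/
noncomputable def nonlinearity (f : ℝ → ℝ) (y : ℝ) : ℝ :=
  -25 * (1 + f y) ^ 4 * dI f y ^ 2
    - 10 * ((1 + f y) ^ 5 - 1) * dI (dI f) y
    - 15 * y * (1 + f y) ^ 3 * dI f y ^ 3
    - 30 * y * (1 + f y) ^ 4 * dI f y * dI (dI f) y
    - 5 * y * ((1 + f y) ^ 5 - 1) * dI (dI (dI f)) y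
    + (1 - y ^ 2) / 2 * (1 + f y) ^ 2 * dI f y ^ 4
    + 11 / 2 * (1 - y ^ 2) * (1 + f y) ^ 3 * dI f y ^ 2 * dI (dI f) y
    + 2 * (1 - y ^ 2) * (1 + f y) ^ 4 * dI (dI f) y ^ 2
    + 7 / 2 * (1 - y ^ 2) * (1 + f y) ^ 4 * dI f y * dI (dI (dI f)) y
    + (1 - y ^ 2) / 2 * ((1 + f y) ^ 5 - 1) * dI (dI (dI (dI f))) y

/-- The part of the energy balance that is superquadratic in `f`, left over once all exact
derivatives have been collected in `energyFlux`. -/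
noncomputable def remainder (f : ℝ → ℝ) (y : ℝ) : ℝ :=
  25 * (1 + f y) ^ 4 * dI f y ^ 2 * dI (dI f) y
    + 15 * y * (1 + f y) ^ 3 * dI f y ^ 3 * dI (dI f) y
    + 19 * y * (1 + f y) ^ 4 * dI f y * dI (dI f) y ^ 2
    - (1 - y ^ 2) / 2 * (1 + f y) ^ 2 * dI f y ^ 4 * dI (dI f) y
    - 7 / 2 * (1 - y ^ 2) * (1 + f y) ^ 3 * dI f y ^ 2 * dI (dI f) y ^ 2
    - 3 / 2 * (1 - y ^ 2) * (1 + f y) ^ 4 * dI (dI f) y ^ 3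
    + ((1 + f y) ^ 5 - 1) * (8 * dI (dI f) y ^ 2 + 1 / 2 * ((1 - y ^ 2) * dI (dI (dI f)) y ^ 2))

/-- The energy flux: the primitive of all terms of the energy balance that are exact derivatives. -/
noncomputable def energyFlux (f : ℝ → ℝ) (y : ℝ) : ℝ :=
  2 * y * (((1 + f y) ^ 5 - 2) * dI (dI f) y ^ 2)
    - 1 / 2 * (1 - y ^ 2) * (((1 + f y) ^ 5 - 2) * (dI (dI f) y * dI (dI (dI f)) y)
      + (1 + f y) ^ 4 * (dI f y * dI (dI f) y ^ 2))

theorem hasDerivAt_energyFlux (hf : ContDiffOn ℝ 4 f (Icc (-1) 1)) (hy : y ∈ Ioo (-1 : ℝ) 1) :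
    HasDerivAt (energyFlux f)
      (8 * dI (dI f) y ^ 2 + 1 / 2 * ((1 - y ^ 2) * dI (dI (dI f)) y ^ 2)
        - dI (dI f) y * (nonlinearity f y - linearOp f y) - remainder f y) y := by
  have hf₁ := contDiffOn_dI (m := 3) hf (by norm_num)
  have hf₂ := contDiffOn_dI (m := 2) hf₁ (by norm_num)
  have hf₃ := contDiffOn_dI (m := 1) hf₂ (by norm_num)
  have h := (hasDerivAt_dI (hf.of_le (by norm_num)) hy).const_add 1
  have w := hasDerivAt_dI (hf₁.of_le (by norm_num)) hy
  have a := hasDerivAt_dI (hf₂.of_le (by norm_num)) hy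
  have b := hasDerivAt_dI hf₃ hy
  have q := (h.fun_pow 5).sub_const 2
  refine ((((hasDerivAt_id' y).const_mul 2).fun_mul (q.fun_mul (a.fun_pow 2))).fun_sub
    (((hasDerivAt_one_sub_sq y).const_mul (1 / 2)).fun_mul
      ((q.fun_mul (a.fun_mul b)).fun_add
        ((h.fun_pow 4).fun_mul (w.fun_mul (a.fun_pow 2)))))).congr_deriv ?_
  simp only [linearOp, nonlinearity, remainder]
  push_cast
  ring

theorem profileDissipation_eq_integral (hf : ContDiffOn ℝ 3 f (Icc (-1) 1)) :
    profileDissipation f = ∫ y in (-1)..1,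
      (8 * dI (dI f) y ^ 2 + 1 / 2 * ((1 - y ^ 2) * dI (dI (dI f)) y ^ 2)) := by
  have hf₂ := contDiffOn_dI (m := 1) (contDiffOn_dI (m := 2) hf (by norm_num)) (by norm_num)
  have c₂ := hf₂.continuousOn
  have c₃ := continuousOn_dI hf₂
  rw [profileDissipation, l2Norm_sq, weightedL2Norm_sq, intervalIntegral.integral_add,
    intervalIntegral.integral_const_mul, intervalIntegral.integral_const_mul]
  all_goals exact intervalIntegrable_of_continuousOn_Icc (by fun_prop)

theorem profileDissipation_sub_integral_eq (hf : ContDiffOn ℝ 4 f (Icc (-1) 1))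
    (hf_left : f (-1) = 0) (hf_right : f 1 = 0) :
    profileDissipation f
        - ∫ y in (-1)..1, dI (dI f) y * (nonlinearity f y - linearOp f y) =
      (∫ y in (-1)..1, remainder f y) - 2 * (dI (dI f) 1 ^ 2 + dI (dI f) (-1) ^ 2) := by
  have hf₁ := contDiffOn_dI (m := 3) hf (by norm_num)
  have hf₂ := contDiffOn_dI (m := 2) hf₁ (by norm_num)
  have hf₃ := contDiffOn_dI (m := 1) hf₂ (by norm_num)
  have c₀ := hf.continuousOn
  have c₁ := hf₁.continuousOn
  have c₂ := hf₂.continuousOn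
  have c₃ := hf₃.continuousOn
  have c₄ := continuousOn_dI hf₃
  have cN : ContinuousOn (nonlinearity f) (Icc (-1) 1) := by
    unfold nonlinearity
    fun_prop
  have cL : ContinuousOn (linearOp f) (Icc (-1) 1) := by
    unfold linearOp
    fun_prop
  have cR : ContinuousOn (remainder f) (Icc (-1) 1) := by
    unfold remainder
    fun_prop
  have cJ : ContinuousOn (energyFlux f) (Icc (-1) 1) := by
    unfold energyFlux
    fun_prop
  have ftc := intervalIntegral.integral_eq_sub_of_hasDerivAt_of_le (by norm_num) cJ
    (fun y hy => hasDerivAt_energyFlux hf hy) (intervalIntegrable_of_continuousOn_Icc (by fun_prop))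
  have boundary : energyFlux f 1 - energyFlux f (-1) =
      -(2 * (dI (dI f) 1 ^ 2 + dI (dI f) (-1) ^ 2)) := by
    simp only [energyFlux, hf_left, hf_right]
    ring
  rw [boundary, intervalIntegral.integral_sub, intervalIntegral.integral_sub,
    ← profileDissipation_eq_integral (hf.of_le (by norm_num))] at ftc
  · linarith
  all_goals exact intervalIntegrable_of_continuousOn_Icc (by fun_prop)

theorem profileEnergy_nonneg (f : ℝ → ℝ) : 0 ≤ profileEnergy f := by
  unfold profileEnergy
  positivity

theorem profileDissipation_nonneg (f : ℝ → ℝ) : 0 ≤ profileDissipation f := by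
  unfold profileDissipation
  positivity

theorem l2Norm_dI_sq (f : ℝ → ℝ) : l2Norm (dI f) ^ 2 = 2 * √(profileEnergy f) ^ 2 := by
  rw [Real.sq_sqrt (profileEnergy_nonneg f), profileEnergy]
  ring

theorem eight_mul_l2Norm_dI_dI_sq_le (f : ℝ → ℝ) :
    8 * l2Norm (dI (dI f)) ^ 2 ≤ √(profileDissipation f) ^ 2 := by
  rw [Real.sq_sqrt (profileDissipation_nonneg f), profileDissipation]
  exact le_add_of_nonneg_right (by positivity)

theorem weightedL2Norm_dI_dI_dI_sq_le (f : ℝ → ℝ) :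
    weightedL2Norm (dI (dI (dI f))) ^ 2 ≤ 2 * √(profileDissipation f) ^ 2 := by
  rw [Real.sq_sqrt (profileDissipation_nonneg f), profileDissipation]
  linarith [sq_nonneg (l2Norm (dI (dI f)))]

theorem abs_le_two_mul_sqrt_profileEnergy (hf : ContDiffOn ℝ 1 f (Icc (-1) 1))
    (hf_left : f (-1) = 0) (hy : y ∈ Icc (-1 : ℝ) 1) : |f y| ≤ 2 * √(profileEnergy f) := by
  refine (abs_le_sqrt_two_mul_l2Norm_dI hf hf_left hy).trans (abs_le_of_sq_le_sq' ?_ ?_).2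
  · rw [mul_pow, mul_pow, l2Norm_dI_sq, Real.sq_sqrt zero_le_two]
    exact le_of_eq (by ring)
  · positivity

theorem l2Norm_dI_mul_l2Norm_dI_dI_le (f : ℝ → ℝ) :
    l2Norm (dI f) * l2Norm (dI (dI f)) ≤
      1 / 2 * (√(profileEnergy f) * √(profileDissipation f)) := by
  refine (abs_le_of_sq_le_sq' ?_ (by positivity)).2
  rw [mul_pow, l2Norm_dI_sq, mul_pow, mul_pow]
  nlinarith [mul_le_mul_of_nonneg_left (eight_mul_l2Norm_dI_dI_sq_le f)
    (sq_nonneg √(profileEnergy f))]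

theorem exists_dI_eq_zero (hf : ContDiffOn ℝ 1 f (Icc (-1) 1)) (hf_left : f (-1) = 0)
    (hf_right : f 1 = 0) : ∃ z ∈ Icc (-1 : ℝ) 1, dI f z = 0 := by
  obtain ⟨z, hz, hfz⟩ := exists_hasDerivAt_eq_zero (by norm_num) hf.continuousOn
    (hf_left.trans hf_right.symm) fun z hz => hasDerivAt_dI hf hz
  exact ⟨z, Ioo_subset_Icc_self hz, hfz⟩

theorem sqrt_profileEnergy_le (hf : ContDiffOn ℝ 2 f (Icc (-1) 1)) (hf_left : f (-1) = 0)
    (hf_right : f 1 = 0) : √(profileEnergy f) ≤ √(profileDissipation f) := by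
  obtain ⟨z, hz, hfz⟩ := exists_dI_eq_zero (hf.of_le one_le_two) hf_left hf_right
  have poincare := l2Norm_le_four_mul_l2Norm_dI (contDiffOn_dI hf (by norm_num)) hz hfz
  refine Real.sqrt_le_sqrt ?_
  rw [profileEnergy, profileDissipation]
  nlinarith [l2Norm_nonneg (dI f), sq_nonneg (weightedL2Norm (dI (dI (dI f))))]

theorem weightedL2Norm_dI_dI_sq_le (hf : ContDiffOn ℝ 3 f (Icc (-1) 1)) :
    weightedL2Norm (dI (dI f)) ^ 2 ≤ 3 * (√(profileEnergy f) * √(profileDissipation f)) := by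
  have interpolation := weightedL2Norm_dI_sq_le (contDiffOn_dI (m := 2) hf (by norm_num))
  have top_order : l2Norm (dI f) * weightedL2Norm (dI (dI (dI f))) ≤
      2 * (√(profileEnergy f) * √(profileDissipation f)) := by
    refine (abs_le_of_sq_le_sq' ?_ (by positivity)).2
    rw [mul_pow, l2Norm_dI_sq, mul_pow, mul_pow]
    nlinarith [mul_le_mul_of_nonneg_left (weightedL2Norm_dI_dI_dI_sq_le f)
      (sq_nonneg √(profileEnergy f))]
  linarith [l2Norm_dI_mul_l2Norm_dI_dI_le f]

theorem weightedL2Norm_mul_weightedL2Norm_le (hf : ContDiffOn ℝ 3 f (Icc (-1) 1)) :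
    weightedL2Norm (dI (dI f)) * weightedL2Norm (dI (dI (dI f))) ≤
      5 / 2 * (√(√(profileEnergy f) * √(profileDissipation f)) * √(profileDissipation f)) := by
  refine (abs_le_of_sq_le_sq' ?_ (by positivity)).2
  rw [mul_pow, mul_pow, mul_pow, Real.sq_sqrt (by positivity)]
  nlinarith [mul_le_mul (weightedL2Norm_dI_dI_sq_le hf) (weightedL2Norm_dI_dI_dI_sq_le f)
    (by positivity) (by positivity)]

theorem sqrt_mul_le_of_le {e d : ℝ} (hd : 0 ≤ d) (hed : e ≤ d) : √(e * d) ≤ d :=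
  (Real.sqrt_le_left hd).2 (by nlinarith)

theorem mul_le_sqrt_mul_mul {e d : ℝ} (he : 0 ≤ e) (hed : e ≤ d) : e * d ≤ √(e * d) * d :=
  have hd := he.trans hed
  calc e * d = √(e * d) * √(e * d) := (Real.mul_self_sqrt (by positivity)).symm
    _ ≤ √(e * d) * d := by
      gcongr
      exact sqrt_mul_le_of_le hd hed

theorem l2Norm_dI_dI_sq_le (hf : ContDiffOn ℝ 3 f (Icc (-1) 1)) (hf_left : f (-1) = 0)
    (hf_right : f 1 = 0) : l2Norm (dI (dI f)) ^ 2 ≤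
      7 * (√(√(profileEnergy f) * √(profileDissipation f)) * √(profileDissipation f)) := by
  have hardy := l2Norm_sq_le_weighted
    (contDiffOn_dI (m := 1) (contDiffOn_dI (m := 2) hf (by norm_num)) (by norm_num))
  have hed := mul_le_sqrt_mul_mul (Real.sqrt_nonneg _)
    (sqrt_profileEnergy_le (hf.of_le (by norm_num)) hf_left hf_right)
  linarith [weightedL2Norm_dI_dI_sq_le hf, weightedL2Norm_mul_weightedL2Norm_le hf]

theorem one_sub_sq_mul_dI_dI_sq_le (hf : ContDiffOn ℝ 3 f (Icc (-1) 1)) (hf_left : f (-1) = 0)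
    (hf_right : f 1 = 0) (hy : y ∈ Icc (-1 : ℝ) 1) : (1 - y ^ 2) * dI (dI f) y ^ 2 ≤
      19 * (√(√(profileEnergy f) * √(profileDissipation f)) * √(profileDissipation f)) := by
  have pointwise := one_sub_sq_mul_sq_le
    (contDiffOn_dI (m := 1) (contDiffOn_dI (m := 2) hf (by norm_num)) (by norm_num)) hy
  linarith [l2Norm_dI_dI_sq_le hf hf_left hf_right, weightedL2Norm_mul_weightedL2Norm_le hf]

theorem abs_one_add_pow_sub_one_le (x : ℝ) (n : ℕ) :
    |(1 + x) ^ n - 1| ≤ (1 + |x|) ^ n - 1 := by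
  induction n with
  | zero => simp
  | succ n ih =>
    calc |(1 + x) ^ (n + 1) - 1| = |(1 + x) * ((1 + x) ^ n - 1) + x| := by ring_nf
      _ ≤ |1 + x| * |(1 + x) ^ n - 1| + |x| := by
        rw [← abs_mul]
        exact abs_add_le _ _
      _ ≤ (1 + |x|) * ((1 + |x|) ^ n - 1) + |x| := by
        gcongr
        exact (abs_add_le _ _).trans_eq (by rw [abs_one])
      _ = (1 + |x|) ^ (n + 1) - 1 := by ring

section RemainderTerms

variable {h w a H S K : ℝ}

theorem terms_linear_in_second_derivative_le (hy : y ∈ Icc (-1 : ℝ) 1) (hH : |h| ≤ H)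
    (hS : |w| ≤ S) :
    25 * h ^ 4 * w ^ 2 * a + 15 * y * h ^ 3 * w ^ 3 * a - (1 - y ^ 2) / 2 * h ^ 2 * w ^ 4 * a ≤
      (25 * H ^ 4 * S + 15 * H ^ 3 * S ^ 2 + 1 / 2 * H ^ 2 * S ^ 3) * (|w| * |a|) := by
  have hy₁ : |y| ≤ 1 := abs_le.2 hy
  have hω₁ : |1 - y ^ 2| ≤ 1 := by
    rw [abs_of_nonneg (one_sub_sq_nonneg hy)]
    exact sub_le_self 1 (sq_nonneg y)
  have hH₀ := (abs_nonneg _).trans hH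
  have quadratic : |25 * h ^ 4 * w ^ 2 * a| ≤ 25 * H ^ 4 * (S * |w|) * |a| := by
    simp only [abs_mul, abs_pow, Nat.abs_ofNat, sq |w|]
    gcongr
  have cubic : |15 * y * h ^ 3 * w ^ 3 * a| ≤ 15 * 1 * H ^ 3 * (S ^ 2 * |w|) * |a| := by
    simp only [abs_mul, abs_pow, Nat.abs_ofNat, pow_succ |w| 2]
    gcongr
  have quartic : |(1 - y ^ 2) / 2 * h ^ 2 * w ^ 4 * a| ≤
      1 / 2 * H ^ 2 * (S ^ 3 * |w|) * |a| := by
    simp only [abs_mul, abs_div, abs_pow, Nat.abs_ofNat, pow_succ |w| 3]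
    gcongr
  linarith [(abs_le.1 quadratic).2, (abs_le.1 cubic).2, (abs_le.1 quartic).1]

theorem terms_superlinear_in_second_derivative_le (hy : y ∈ Icc (-1 : ℝ) 1) (hH : |h| ≤ H)
    (hS : |w| ≤ S) (hK : |√(1 - y ^ 2) * a| ≤ K) :
    19 * y * h ^ 4 * w * a ^ 2 - 7 / 2 * (1 - y ^ 2) * h ^ 3 * w ^ 2 * a ^ 2
        - 3 / 2 * (1 - y ^ 2) * h ^ 4 * a ^ 3 ≤
      19 * H ^ 4 * S * a ^ 2 + 7 / 2 * H ^ 3 * S ^ 2 * ((1 - y ^ 2) * a ^ 2)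
        + 3 / 2 * H ^ 4 * K * (|√(1 - y ^ 2) * a| * |a|) := by
  have hω := one_sub_sq_nonneg hy
  have hy₁ : |y| ≤ 1 := abs_le.2 hy
  have hH₀ := (abs_nonneg _).trans hH
  have quadratic : |19 * y * h ^ 4 * w * a ^ 2| ≤ 19 * 1 * H ^ 4 * S * a ^ 2 := by
    simp only [abs_mul, abs_pow, Nat.abs_ofNat, sq_abs a]
    gcongr
  have quadratic' : |7 / 2 * (1 - y ^ 2) * h ^ 3 * w ^ 2 * a ^ 2| ≤
      7 / 2 * (1 - y ^ 2) * H ^ 3 * S ^ 2 * a ^ 2 := by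
    simp only [abs_mul, abs_div, abs_pow, Nat.abs_ofNat, abs_of_nonneg hω, sq_abs a]
    gcongr
  have cubic : |3 / 2 * (1 - y ^ 2) * h ^ 4 * a ^ 3| ≤
      3 / 2 * H ^ 4 * (K * |√(1 - y ^ 2) * a|) * |a| :=
    calc |3 / 2 * (1 - y ^ 2) * h ^ 4 * a ^ 3|
        = 3 / 2 * |h| ^ 4 * (|√(1 - y ^ 2) * a| * |√(1 - y ^ 2) * a|) * |a| := by
          rw [abs_sqrt_mul_mul_abs_sqrt_mul hω]
          simp only [abs_mul, abs_div, abs_pow, Nat.abs_ofNat, abs_of_nonneg hω]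
          ring
      _ ≤ 3 / 2 * H ^ 4 * (K * |√(1 - y ^ 2) * a|) * |a| := by gcongr
  linarith [(abs_le.1 quadratic).2, (abs_le.1 quadratic').1, (abs_le.1 cubic).1]

theorem remainder_le (hy : y ∈ Icc (-1 : ℝ) 1) (hH : 1 + |f y| ≤ H) (hS : |dI f y| ≤ S)
    (hK : |√(1 - y ^ 2) * dI (dI f) y| ≤ K) :
    remainder f y ≤
      (25 * H ^ 4 * S + 15 * H ^ 3 * S ^ 2 + 1 / 2 * H ^ 2 * S ^ 3) * (|dI f y| * |dI (dI f) y|)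
        + (19 * H ^ 4 * S * dI (dI f) y ^ 2
          + 7 / 2 * H ^ 3 * S ^ 2 * ((1 - y ^ 2) * dI (dI f) y ^ 2)
          + 3 / 2 * H ^ 4 * K * (|√(1 - y ^ 2) * dI (dI f) y| * |dI (dI f) y|))
        + (H ^ 5 - 1) * (8 * dI (dI f) y ^ 2 + 1 / 2 * ((1 - y ^ 2) * dI (dI (dI f)) y ^ 2)) := by
  have hω := one_sub_sq_nonneg hy
  have hh : |1 + f y| ≤ H := (abs_add_le _ _).trans (by rwa [abs_one])
  have hfive : (1 + f y) ^ 5 - 1 ≤ H ^ 5 - 1 :=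
    calc (1 + f y) ^ 5 - 1 ≤ (1 + |f y|) ^ 5 - 1 :=
          (le_abs_self _).trans (abs_one_add_pow_sub_one_le (f y) 5)
      _ ≤ H ^ 5 - 1 := by gcongr
  calc remainder f y = (25 * (1 + f y) ^ 4 * dI f y ^ 2 * dI (dI f) y
          + 15 * y * (1 + f y) ^ 3 * dI f y ^ 3 * dI (dI f) y
          - (1 - y ^ 2) / 2 * (1 + f y) ^ 2 * dI f y ^ 4 * dI (dI f) y)
        + (19 * y * (1 + f y) ^ 4 * dI f y * dI (dI f) y ^ 2
          - 7 / 2 * (1 - y ^ 2) * (1 + f y) ^ 3 * dI f y ^ 2 * dI (dI f) y ^ 2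
          - 3 / 2 * (1 - y ^ 2) * (1 + f y) ^ 4 * dI (dI f) y ^ 3)
        + ((1 + f y) ^ 5 - 1) *
          (8 * dI (dI f) y ^ 2 + 1 / 2 * ((1 - y ^ 2) * dI (dI (dI f)) y ^ 2)) := by
        rw [remainder]
        ring
    _ ≤ _ := add_le_add (add_le_add (terms_linear_in_second_derivative_le hy hh hS)
      (terms_superlinear_in_second_derivative_le hy hh hS hK)) (by gcongr)

theorem integral_remainder_le (hf : ContDiffOn ℝ 3 f (Icc (-1) 1))
    (hH : ∀ y ∈ Icc (-1 : ℝ) 1, 1 + |f y| ≤ H) (hS : ∀ y ∈ Icc (-1 : ℝ) 1, |dI f y| ≤ S)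
    (hK : ∀ y ∈ Icc (-1 : ℝ) 1, |√(1 - y ^ 2) * dI (dI f) y| ≤ K) :
    ∫ y in (-1)..1, remainder f y ≤
      (25 * H ^ 4 * S + 15 * H ^ 3 * S ^ 2 + 1 / 2 * H ^ 2 * S ^ 3)
          * (l2Norm (dI f) * l2Norm (dI (dI f)))
        + (19 * H ^ 4 * S * l2Norm (dI (dI f)) ^ 2
          + 7 / 2 * H ^ 3 * S ^ 2 * weightedL2Norm (dI (dI f)) ^ 2
          + 3 / 2 * H ^ 4 * K * (weightedL2Norm (dI (dI f)) * l2Norm (dI (dI f))))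
        + (H ^ 5 - 1) * profileDissipation f := by
  have hf₁ := contDiffOn_dI (m := 2) hf (by norm_num)
  have hf₂ := contDiffOn_dI (m := 1) hf₁ (by norm_num)
  have c₀ := hf.continuousOn
  have c₁ := hf₁.continuousOn
  have c₂ := hf₂.continuousOn
  have c₃ := continuousOn_dI hf₂
  have cR : ContinuousOn (remainder f) (Icc (-1) 1) := by
    unfold remainder
    fun_prop
  have hH₀ : 0 ≤ H := by linarith [hH 1 (by norm_num), abs_nonneg (f 1)]
  have hS₀ : 0 ≤ S := (abs_nonneg _).trans (hS 1 (by norm_num))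
  have hK₀ : 0 ≤ K := (abs_nonneg _).trans (hK 1 (by norm_num))
  have integrable {p : ℝ → ℝ} := intervalIntegrable_of_continuousOn_Icc (u := p)
  refine (intervalIntegral.integral_mono_on (by norm_num) (integrable cR) (integrable (by fun_prop))
    fun y hy => remainder_le hy (hH y hy) (hS y hy) (hK y hy)).trans ?_
  rw [intervalIntegral.integral_add (integrable (by fun_prop)) (integrable (by fun_prop)),
    intervalIntegral.integral_add (integrable (by fun_prop)) (integrable (by fun_prop)),
    intervalIntegral.integral_add (integrable (by fun_prop)) (integrable (by fun_prop)),
    intervalIntegral.integral_add (integrable (by fun_prop)) (integrable (by fun_prop))]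
  simp only [intervalIntegral.integral_const_mul]
  rw [← profileDissipation_eq_integral hf, ← l2Norm_sq, ← weightedL2Norm_sq]
  gcongr
  · exact integral_abs_mul_abs_le c₁ c₂
  · exact integral_abs_mul_abs_le (by fun_prop) c₂

end RemainderTerms

theorem one_add_two_mul_pow_five_sub_one_le {e : ℝ} (he : 0 ≤ e) :
    (1 + 2 * e) ^ 5 - 1 ≤ 10 * (1 + 2 * e) ^ 4 * e := by
  have : 0 ≤ 40 * e ^ 2 + 160 * e ^ 3 + 240 * e ^ 4 + 128 * e ^ 5 := by positivity
  linarith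

theorem one_add_two_mul_pow_four_mul_le {e : ℝ} (he : 0 ≤ e) :
    (1 + 2 * e) ^ 4 * e ≤ 81 * (e + e ^ 5) := by
  rcases le_total e 1 with h | h
  · calc (1 + 2 * e) ^ 4 * e ≤ (1 + 2 * 1) ^ 4 * e := by gcongr
      _ ≤ 81 * (e + e ^ 5) := by linarith [pow_nonneg he 5]
  · calc (1 + 2 * e) ^ 4 * e ≤ (e + 2 * e) ^ 4 * e := by gcongr
      _ ≤ 81 * (e + e ^ 5) := by linarith

section Powers

variable {e d n α A S K : ℝ}

theorem powers_of_slope_bound_le (he : 0 ≤ e) (hed : e ≤ d) (hn : n ^ 2 = 2 * e ^ 2)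
    (hnα : n * α ≤ 1 / 2 * (e * d)) (hSsq : S ^ 2 = 2 * n * α)
    (hα : α ^ 2 ≤ 7 * (√(e * d) * d)) :
    S * (n * α) ≤ 1 / 2 * e * d ^ 2 ∧ S ^ 2 * (n * α) ≤ 1 / 2 * e ^ 2 * d ^ 2 ∧
      S ^ 3 * (n * α) ≤ 28 * e ^ 3 * d ^ 2 ∧ S * α ^ 2 ≤ 7 * e * d ^ 2 := by
  have hd := he.trans hed
  have hSd : S ≤ √(e * d) := Real.le_sqrt_of_sq_le (by linarith)
  have hnα₀ : 0 ≤ n * α := by linarith [sq_nonneg S]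
  have quadratic : S * α ^ 2 ≤ 7 * e * d ^ 2 :=
    calc S * α ^ 2 ≤ √(e * d) * (7 * (√(e * d) * d)) := by gcongr
      _ = 7 * √(e * d) ^ 2 * d := by ring
      _ = 7 * e * d ^ 2 := by
        rw [Real.sq_sqrt (by positivity)]
        ring
  refine ⟨?_, ?_, ?_, quadratic⟩
  · calc S * (n * α) ≤ d * (1 / 2 * (e * d)) := by
          gcongr
          exact hSd.trans (sqrt_mul_le_of_le hd hed)
      _ = 1 / 2 * e * d ^ 2 := by ring
  · calc S ^ 2 * (n * α) = 2 * (n * α) ^ 2 := by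
          rw [hSsq]
          ring
      _ ≤ 2 * (1 / 2 * (e * d)) ^ 2 := by gcongr
      _ = 1 / 2 * e ^ 2 * d ^ 2 := by ring
  · calc S ^ 3 * (n * α) = S * S ^ 2 * (n * α) := by ring
      _ = 2 * n ^ 2 * (S * α ^ 2) := by
        rw [hSsq]
        ring
      _ ≤ 2 * n ^ 2 * (7 * e * d ^ 2) := by gcongr
      _ = 28 * e ^ 3 * d ^ 2 := by
        rw [hn]
        ring

theorem weighted_products_le (he : 0 ≤ e) (hd : 0 ≤ d) (hnα : n * α ≤ 1 / 2 * (e * d))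
    (hSsq : S ^ 2 = 2 * n * α) (hA : A ^ 2 ≤ 3 * (e * d)) (hα : α ^ 2 ≤ 7 * (√(e * d) * d))
    (hK : K ^ 2 = 19 * (√(e * d) * d)) :
    S ^ 2 * A ^ 2 ≤ 3 * e ^ 2 * d ^ 2 ∧ K * (A * α) ≤ 20 * e * d ^ 2 := by
  constructor
  · calc S ^ 2 * A ^ 2 ≤ e * d * (3 * (e * d)) := by
          gcongr
          linarith
      _ = 3 * e ^ 2 * d ^ 2 := by ring
  · refine (abs_le_of_sq_le_sq' ?_ (by positivity)).2
    calc (K * (A * α)) ^ 2 = K ^ 2 * (A ^ 2 * α ^ 2) := by ring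
      _ ≤ 19 * (√(e * d) * d) * (3 * (e * d) * (7 * (√(e * d) * d))) := by
        rw [hK]
        gcongr
      _ = 399 * √(e * d) ^ 2 * e * d ^ 3 := by ring
      _ = 399 * (e * d ^ 2) ^ 2 := by
        rw [Real.sq_sqrt (by positivity)]
        ring
      _ ≤ (20 * e * d ^ 2) ^ 2 := by linarith [sq_nonneg (e * d ^ 2)]

theorem remainder_bound_le (he : 0 ≤ e) (hed : e ≤ d) (hn : n ^ 2 = 2 * e ^ 2)
    (hnα : n * α ≤ 1 / 2 * (e * d)) (hSsq : S ^ 2 = 2 * n * α) (hA : A ^ 2 ≤ 3 * (e * d))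
    (hα : α ^ 2 ≤ 7 * (√(e * d) * d)) (hK : K ^ 2 = 19 * (√(e * d) * d)) :
    (25 * (1 + 2 * e) ^ 4 * S + 15 * (1 + 2 * e) ^ 3 * S ^ 2 + 1 / 2 * (1 + 2 * e) ^ 2 * S ^ 3)
          * (n * α)
        + (19 * (1 + 2 * e) ^ 4 * S * α ^ 2 + 7 / 2 * (1 + 2 * e) ^ 3 * S ^ 2 * A ^ 2
          + 3 / 2 * (1 + 2 * e) ^ 4 * K * (A * α))
        + ((1 + 2 * e) ^ 5 - 1) * d ^ 2 ≤
      200 * ((1 + 2 * e) ^ 4 * e) * d ^ 2 := by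
  obtain ⟨slope, slope_sq, slope_cube, slope_top⟩ :=
    powers_of_slope_bound_le he hed hn hnα hSsq hα
  obtain ⟨weighted, weighted_top⟩ := weighted_products_le he (he.trans hed) hnα hSsq hA hα hK
  set H := 1 + 2 * e
  have heH : 2 * e ≤ H := by linarith
  calc _ = 25 * H ^ 4 * (S * (n * α)) + 15 * H ^ 3 * (S ^ 2 * (n * α))
        + 1 / 2 * H ^ 2 * (S ^ 3 * (n * α)) + 19 * H ^ 4 * (S * α ^ 2)
        + 7 / 2 * H ^ 3 * (S ^ 2 * A ^ 2) + 3 / 2 * H ^ 4 * (K * (A * α))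
        + (H ^ 5 - 1) * d ^ 2 := by ring
    _ ≤ 25 * H ^ 4 * (1 / 2 * e * d ^ 2) + 15 * H ^ 3 * (1 / 2 * e ^ 2 * d ^ 2)
        + 1 / 2 * H ^ 2 * (28 * e ^ 3 * d ^ 2) + 19 * H ^ 4 * (7 * e * d ^ 2)
        + 7 / 2 * H ^ 3 * (3 * e ^ 2 * d ^ 2) + 3 / 2 * H ^ 4 * (20 * e * d ^ 2)
        + 10 * H ^ 4 * e * d ^ 2 := by
        gcongr
        exact one_add_two_mul_pow_five_sub_one_le he
    _ = (371 / 2 * H ^ 4 + 9 * H ^ 3 * (2 * e) + 7 / 2 * H ^ 2 * (2 * e) ^ 2) * e * d ^ 2 := by ring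
    _ ≤ (371 / 2 * H ^ 4 + 9 * H ^ 3 * H + 7 / 2 * H ^ 2 * H ^ 2) * e * d ^ 2 := by gcongr
    _ ≤ 200 * (H ^ 4 * e) * d ^ 2 := by
        have : 0 ≤ H ^ 4 * e * d ^ 2 := by positivity
        linarith

end Powers

theorem integral_remainder_le_sqrt_profileEnergy (hf : ContDiffOn ℝ 3 f (Icc (-1) 1))
    (hf_left : f (-1) = 0) (hf_right : f 1 = 0) :
    ∫ y in (-1)..1, remainder f y ≤
      200 * ((1 + 2 * √(profileEnergy f)) ^ 4 * √(profileEnergy f)) * profileDissipation f := by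
  obtain ⟨z, hz, hfz⟩ := exists_dI_eq_zero (hf.of_le (by norm_num)) hf_left hf_right
  have bound := integral_remainder_le hf
    (H := 1 + 2 * √(profileEnergy f)) (S := √(2 * l2Norm (dI f) * l2Norm (dI (dI f))))
    (K := √(19 * (√(√(profileEnergy f) * √(profileDissipation f)) * √(profileDissipation f))))
    (fun y hy => by grw [abs_le_two_mul_sqrt_profileEnergy (hf.of_le (by norm_num)) hf_left hy])
    (fun y hy => Real.abs_le_sqrt
      (sq_le_two_mul_l2Norm_mul_l2Norm_dI (contDiffOn_dI (m := 1) hf (by norm_num)) hz hfz hy))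
    (fun y hy => Real.abs_le_sqrt (by
      rw [mul_pow, Real.sq_sqrt (one_sub_sq_nonneg hy)]
      exact one_sub_sq_mul_dI_dI_sq_le hf hf_left hf_right hy))
  have products := remainder_bound_le (Real.sqrt_nonneg _)
    (sqrt_profileEnergy_le (hf.of_le (by norm_num)) hf_left hf_right) (l2Norm_dI_sq f)
    (l2Norm_dI_mul_l2Norm_dI_dI_le f)
    (Real.sq_sqrt (mul_nonneg (mul_nonneg zero_le_two (l2Norm_nonneg _)) (l2Norm_nonneg _)))
    (weightedL2Norm_dI_dI_sq_le hf) (l2Norm_dI_dI_sq_le hf hf_left hf_right)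
    (Real.sq_sqrt (by positivity))
  rw [Real.sq_sqrt (profileDissipation_nonneg f)] at products
  exact bound.trans products

theorem profileDissipation_sub_integral_le (hf : ContDiffOn ℝ 4 f (Icc (-1) 1))
    (hf_left : f (-1) = 0) (hf_right : f 1 = 0) :
    profileDissipation f - ∫ y in (-1)..1, dI (dI f) y * (nonlinearity f y - linearOp f y) ≤
      16200 * ((√(profileEnergy f) + √(profileEnergy f) ^ 5) * profileDissipation f) :=
  calc profileDissipation f - ∫ y in (-1)..1, dI (dI f) y * (nonlinearity f y - linearOp f y)
      ≤ ∫ y in (-1)..1, remainder f y := by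
        rw [profileDissipation_sub_integral_eq hf hf_left hf_right]
        exact sub_le_self _ (by positivity)
    _ ≤ 200 * ((1 + 2 * √(profileEnergy f)) ^ 4 * √(profileEnergy f)) * profileDissipation f :=
        integral_remainder_le_sqrt_profileEnergy (hf.of_le (by norm_num)) hf_left hf_right
    _ ≤ 200 * (81 * (√(profileEnergy f) + √(profileEnergy f) ^ 5)) * profileDissipation f :=
        mul_le_mul_of_nonneg_right (mul_le_mul_of_nonneg_left
          (one_add_two_mul_pow_four_mul_le (Real.sqrt_nonneg _)) (by norm_num))
          (profileDissipation_nonneg f)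
    _ = 16200 * ((√(profileEnergy f) + √(profileEnergy f) ^ 5) * profileDissipation f) := by ring

end Profile

theorem energy_eq_profileEnergy (g : ℝ → ℝ → ℝ) (t : ℝ) : energy g t = profileEnergy (g t) := by
  rw [energy, profileEnergy, l2Norm_sq, intervalIntegral_eq_setIntegral_Ioo (by norm_num)]

theorem dissipation_eq_profileDissipation (g : ℝ → ℝ → ℝ) (t : ℝ) :
    dissipation g t = profileDissipation (g t) := by
  rw [dissipation, profileDissipation, l2Norm_sq, weightedL2Norm_sq,
    intervalIntegral_eq_setIntegral_Ioo (by norm_num),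
    intervalIntegral_eq_setIntegral_Ioo (by norm_num)]

section SpaceTime

variable {g : ℝ → ℝ → ℝ} {I : Set ℝ} {m n : WithTop ℕ∞} {t y : ℝ}

theorem contDiffOn_slice (hg : ContDiffOn ℝ n (Function.uncurry g) (I ×ˢ Icc (-1) 1))
    (ht : t ∈ I) : ContDiffOn ℝ n (g t) (Icc (-1) 1) :=
  hg.comp (contDiff_prodMk_right t).contDiffOn fun _ hy => ⟨ht, hy⟩

theorem uniqueDiffOn_strip (hI : IsOpen I) : UniqueDiffOn ℝ (I ×ˢ Icc (-1 : ℝ) 1) :=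
  hI.uniqueDiffOn.prod uniqueDiffOn_Icc_neg_one_one

theorem dI_eq_fderivWithin (hg : DifferentiableOn ℝ (Function.uncurry g) (I ×ˢ Icc (-1) 1))
    (ht : t ∈ I) (hy : y ∈ Icc (-1 : ℝ) 1) :
    dI (g t) y = fderivWithin ℝ (Function.uncurry g) (I ×ˢ Icc (-1) 1) (t, y) (0, 1) :=
  (hasDerivWithinAt_snd_of_differentiableOn hg ht hy).derivWithin
    (uniqueDiffOn_Icc_neg_one_one y hy)

theorem deriv_eq_fderivWithin (hg : DifferentiableOn ℝ (Function.uncurry g) (I ×ˢ Icc (-1) 1))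
    (hI : I ∈ nhds t) (hy : y ∈ Icc (-1 : ℝ) 1) :
    deriv (fun s => g s y) t =
      fderivWithin ℝ (Function.uncurry g) (I ×ˢ Icc (-1) 1) (t, y) (1, 0) :=
  (hasDerivAt_fst_of_differentiableOn hg hI hy).deriv

theorem contDiffOn_uncurry_dI (hI : IsOpen I)
    (hg : ContDiffOn ℝ n (Function.uncurry g) (I ×ˢ Icc (-1) 1)) (hmn : m + 1 ≤ n) :
    ContDiffOn ℝ m (Function.uncurry fun s => dI (g s)) (I ×ˢ Icc (-1) 1) :=
  ((hg.fderivWithin (uniqueDiffOn_strip hI) hmn).clm_apply contDiffOn_const).congr fun _ hq =>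
    dI_eq_fderivWithin ((hg.of_le (le_add_self.trans hmn)).differentiableOn one_ne_zero) hq.1 hq.2

theorem contDiffOn_uncurry_deriv (hI : IsOpen I)
    (hg : ContDiffOn ℝ n (Function.uncurry g) (I ×ˢ Icc (-1) 1)) (hmn : m + 1 ≤ n) :
    ContDiffOn ℝ m (Function.uncurry fun s y => deriv (fun r => g r y) s) (I ×ˢ Icc (-1) 1) :=
  ((hg.fderivWithin (uniqueDiffOn_strip hI) hmn).clm_apply contDiffOn_const).congr fun _ hq =>
    deriv_eq_fderivWithin ((hg.of_le (le_add_self.trans hmn)).differentiableOn one_ne_zero)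
      (hI.mem_nhds hq.1) hq.2

theorem deriv_dI_comm (hI : IsOpen I) (ht : t ∈ I)
    (hg : ContDiffOn ℝ 2 (Function.uncurry g) (I ×ˢ Icc (-1) 1)) (hy : y ∈ Ioo (-1 : ℝ) 1) :
    deriv (fun s => dI (g s) y) t = dI (fun z => deriv (fun s => g s z) t) y := by
  have hyc : y ∈ Icc (-1 : ℝ) 1 := Ioo_subset_Icc_self hy
  have hgd := hg.differentiableOn two_ne_zero
  set S := I ×ˢ Icc (-1 : ℝ) 1
  set dG := fderivWithin ℝ (Function.uncurry g) S
  have hdG : DifferentiableOn ℝ dG S :=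
    (hg.fderivWithin (uniqueDiffOn_strip hI) (m := 1) (by norm_num)).differentiableOn one_ne_zero
  have time_space : deriv (fun s => dI (g s) y) t = fderivWithin ℝ dG S (t, y) (1, 0) (0, 1) := by
    have h := ((hasDerivAt_fst_of_differentiableOn hdG (hI.mem_nhds ht) hyc).clm_apply
      (hasDerivAt_const t (0, 1))).congr_deriv (by rw [map_zero, add_zero])
    refine (h.congr_of_eventuallyEq ?_).deriv
    filter_upwards [hI.mem_nhds ht] with s hs
    exact dI_eq_fderivWithin hgd hs hyc
  have space_time : dI (fun z => deriv (fun s => g s z) t) y =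
      fderivWithin ℝ dG S (t, y) (0, 1) (1, 0) := by
    have h := ((hasDerivWithinAt_snd_of_differentiableOn hdG ht hyc).clm_apply
      (hasDerivWithinAt_const y _ (1, 0))).congr_deriv (by rw [map_zero, add_zero])
    exact (h.congr_of_mem (fun z hz => deriv_eq_fderivWithin hgd (hI.mem_nhds ht) hz)
      hyc).derivWithin (uniqueDiffOn_Icc_neg_one_one y hyc)
  have interior : (t, y) ∈ interior S :=
    mem_interior_iff_mem_nhds.2 (prod_mem_nhds (hI.mem_nhds ht) (Icc_mem_nhds hy.1 hy.2))
  rw [time_space, space_time]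
  exact (hg (t, y) ⟨ht, hyc⟩).isSymmSndFDerivWithinAt
    (minSmoothness_of_isRCLikeNormedField (n := 2)).le (uniqueDiffOn_strip hI)
    (subset_closure interior) ⟨ht, hyc⟩ _ _

theorem deriv_eq_zero_of_eq_zero_on (hI : I ∈ nhds t) {φ : ℝ → ℝ} (hφ : ∀ s ∈ I, φ s = 0) :
    deriv φ t = 0 := by
  have : φ =ᶠ[nhds t] fun _ => 0 := by
    filter_upwards [hI] with s hs using hφ s hs
  rw [this.deriv_eq, deriv_const]

theorem hasDerivAt_energy (hI : IsOpen I) (ht : t ∈ I)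
    (hg : ContDiffOn ℝ 2 (Function.uncurry g) (I ×ˢ Icc (-1) 1)) :
    HasDerivAt (energy g)
      (∫ y in (-1)..1, dI (g t) y * dI (fun z => deriv (fun s => g s z) t) y) t := by
  have hw := contDiffOn_uncurry_dI (m := 1) hI hg (by norm_num)
  have cw := hw.continuousOn
  have cwt := (contDiffOn_uncurry_deriv (m := 0) hI hw (by norm_num)).continuousOn
  have under_integral := (hasDerivAt_integral_of_continuousOn (by norm_num) hI ht
    (F := fun s y => dI (g s) y ^ 2)
    (F' := fun s y => 2 * dI (g s) y * deriv (fun r => dI (g r) y) s)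
    (fun s hs => (contDiffOn_slice hw hs).continuousOn.pow 2)
    (((continuousOn_const (c := 2)).mul cw).mul cwt)
    fun s hs y hy => by
      simpa using (hasDerivAt_fst_of_differentiableOn (hw.differentiableOn one_ne_zero)
        (hI.mem_nhds hs) hy).differentiableAt.hasDerivAt.fun_pow 2).const_mul (1 / 2)
  have energy_eq : energy g = fun s => 1 / 2 * ∫ y in (-1)..1, dI (g s) y ^ 2 := by
    ext s
    rw [energy_eq_profileEnergy, profileEnergy, l2Norm_sq]
  rw [energy_eq]
  refine under_integral.congr_deriv ?_
  rw [← intervalIntegral.integral_const_mul]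
  refine intervalIntegral_congr_Ioo (by norm_num) fun y hy => ?_
  simp only [deriv_dI_comm hI ht hg hy]
  ring

theorem hasDerivAt_energy_of_eq_zero (hI : IsOpen I) (ht : t ∈ I)
    (hg : ContDiffOn ℝ 2 (Function.uncurry g) (I ×ˢ Icc (-1) 1))
    (hg₀ : ∀ s ∈ I, g s (-1) = 0 ∧ g s 1 = 0) :
    HasDerivAt (energy g) (-∫ y in (-1)..1, dI (dI (g t)) y * deriv (fun s => g s y) t) t := by
  refine (hasDerivAt_energy hI ht hg).congr_deriv ?_
  rw [integral_mul_dI_eq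
      (contDiffOn_slice (contDiffOn_uncurry_dI (m := 1) hI hg (by norm_num)) ht)
      (contDiffOn_slice (contDiffOn_uncurry_deriv (m := 1) hI hg (by norm_num)) ht),
    deriv_eq_zero_of_eq_zero_on (hI.mem_nhds ht) fun s hs => (hg₀ s hs).1,
    deriv_eq_zero_of_eq_zero_on (hI.mem_nhds ht) fun s hs => (hg₀ s hs).2]
  ring

end SpaceTime

theorem sqrt_add_sqrt_pow_five_le {x : ℝ} (hx : 0 ≤ x) :
    √x + √x ^ 5 ≤ 2 * (x ^ ((1 : ℝ) / 3) + x ^ ((5 : ℝ) / 2)) := by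
  have five : √x ^ 5 = x ^ ((5 : ℝ) / 2) := by
    rw [Real.sqrt_eq_rpow, ← Real.rpow_mul_natCast hx]
    norm_num
  have one : √x ≤ x ^ ((1 : ℝ) / 3) + x ^ ((5 : ℝ) / 2) := by
    rw [Real.sqrt_eq_rpow]
    rcases le_total x 1 with h | h
    · exact (Real.rpow_le_rpow_of_exponent_ge_of_imp hx h (by norm_num) (by norm_num)).trans
        (le_add_of_nonneg_right (by positivity))
    · exact (Real.rpow_le_rpow_of_exponent_le h (by norm_num)).trans
        (le_add_of_nonneg_left (by positivity))
  linarith [Real.rpow_nonneg hx ((1 : ℝ) / 3)]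

theorem sqrt_add_sqrt_pow_five_mul_le {E D : ℝ} (hE : 0 ≤ E) (hD : 0 ≤ D) :
    16200 * ((√E + √E ^ 5) * D) ≤
      32400 * (E ^ 2 + E ^ 10 + (E ^ ((1 : ℝ) / 3) + E ^ ((5 : ℝ) / 2)) * D) :=
  calc 16200 * ((√E + √E ^ 5) * D)
      ≤ 16200 * (2 * (E ^ ((1 : ℝ) / 3) + E ^ ((5 : ℝ) / 2)) * D) := by
        gcongr
        exact sqrt_add_sqrt_pow_five_le hE
    _ = 32400 * ((E ^ ((1 : ℝ) / 3) + E ^ ((5 : ℝ) / 2)) * D) := by ring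
    _ ≤ 32400 * (E ^ 2 + E ^ 10 + (E ^ ((1 : ℝ) / 3) + E ^ ((5 : ℝ) / 2)) * D) := by
        gcongr
        exact le_add_of_nonneg_left (by positivity)

theorem energy_estimate_general {g : ℝ → ℝ → ℝ} {I : Set ℝ} {t : ℝ} (hI : IsOpen I) (ht : t ∈ I)
    (hg : ContDiffOn ℝ 4 (Function.uncurry g) (I ×ˢ Icc (-1) 1))
    (hg₀ : ∀ s ∈ I, g s (-1) = 0 ∧ g s 1 = 0)
    (hpde : ∀ y ∈ Ioo (-1 : ℝ) 1,
      deriv (fun s => g s y) t + linearOp (g t) y = nonlinearity (g t) y) :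
    deriv (energy g) t + dissipation g t ≤
      16200 * ((√(energy g t) + √(energy g t) ^ 5) * dissipation g t) := by
  have tested : ∫ y in (-1)..1, dI (dI (g t)) y * deriv (fun s => g s y) t =
      ∫ y in (-1)..1, dI (dI (g t)) y * (nonlinearity (g t) y - linearOp (g t) y) :=
    intervalIntegral_congr_Ioo (by norm_num) fun y hy => by
      simp only [eq_sub_of_add_eq (hpde y hy)]
  rw [(hasDerivAt_energy_of_eq_zero hI ht (hg.of_le (by norm_num)) hg₀).deriv, tested,
    neg_add_eq_sub, energy_eq_profileEnergy, dissipation_eq_profileDissipation]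
  exact profileDissipation_sub_integral_le (contDiffOn_slice hg ht) (hg₀ t ht).1 (hg₀ t ht).2

/-- **Proposition 4.1 (the energy estimate)**: for a smooth solution `g` of the Lagrangian
thin-film equation, `E'(t) + D(t) ≲ E² + E¹⁰ + (E^{1/3} + E^{5/2}) D` for all `t > 0`. -/
theorem energy_estimate (g : ℝ → ℝ → ℝ) (hg : IsSolution g) :
    ∃ C > (0:ℝ), ∀ t > (0:ℝ),
      deriv (energy g) t + dissipation g t ≤
        C * (energy g t ^ 2 + energy g t ^ 10
          + (energy g t ^ ((1:ℝ)/3) + energy g t ^ ((5:ℝ)/2)) * dissipation g t) := by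
  obtain ⟨hsmooth, hzero, hpde⟩ := hg
  refine ⟨32400, by norm_num, fun t ht => ?_⟩
  have hsmooth_pos : ContDiffOn ℝ 4 (Function.uncurry g) (Ioi 0 ×ˢ Icc (-1) 1) :=
    (contDiffOn_infty.1 hsmooth 4).mono (prod_mono_left Ioi_subset_Ici_self)
  refine (energy_estimate_general isOpen_Ioi ht hsmooth_pos (fun s hs => hzero s (le_of_lt hs))
    (hpde t ht)).trans (sqrt_add_sqrt_pow_five_mul_le ?_ ?_)
  · exact energy_eq_profileEnergy g t ▸ profileEnergy_nonneg (g t)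
  · exact dissipation_eq_profileDissipation g t ▸ profileDissipation_nonneg (g t)
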